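/- arXiv:2009.10619 — 3 statements merged into one kernel-verified Lean document; each statement's English description precedes it below -/
import Mathlib

section
/- Let T be a nonempty finite index set, let P be a type (the parameter space), let F : P → T → ℝ be a family of forecast maps, and let d : T → ℝ satisfy m ≤ d(t) ≤ M for all t ∈ T with 0 < m. Define L_ES(Θ) = Σ_{t∈T} (F(Θ)(t) − d(t))² and L_PES(Θ) = Σ_{t∈T} ((F(Θ)(t) − d(t))/d(t))². If Θ*_ES is a global minimizer of L_ES over P and Θ*_PES is a global minimizer of L_PES over P, then L_ES(Θ*_ES) ≤ L_ES(Θ*_PES) ≤ (M²/m²) · L_ES(Θ*_ES). -/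
/-!
Since `m ≤ d t ≤ M`, the two losses are comparable at every parameter:
`L_ES ≤ M² * L_PES` and `L_PES ≤ L_ES / m²`. Minimality of `ΘPES` for the percentage loss
links the two comparisons:
`L_ES(ΘPES) ≤ M² * L_PES(ΘPES) ≤ M² * L_PES(ΘES) ≤ (M² / m²) * L_ES(ΘES)`.
-/

theorem es_of_minimizers_bound {T : Type*} [Fintype T] [Nonempty T] {P : Type*}
    (F : P → T → ℝ) (d : T → ℝ) (m M : ℝ) (hm : 0 < m)
    (hbound : ∀ t, m ≤ d t ∧ d t ≤ M)
    (ΘES ΘPES : P)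
    (hES : ∀ Θ : P, ∑ t, (F ΘES t - d t) ^ 2 ≤ ∑ t, (F Θ t - d t) ^ 2)
    (hPES : ∀ Θ : P, ∑ t, ((F ΘPES t - d t) / d t) ^ 2 ≤ ∑ t, ((F Θ t - d t) / d t) ^ 2) :
    ∑ t, (F ΘES t - d t) ^ 2 ≤ ∑ t, (F ΘPES t - d t) ^ 2 ∧
    ∑ t, (F ΘPES t - d t) ^ 2 ≤ (M ^ 2 / m ^ 2) * ∑ t, (F ΘES t - d t) ^ 2 := by
  refine ⟨hES ΘPES, ?_⟩
  have hpos : ∀ t, 0 < d t := fun t => hm.trans_le (hbound t).1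
  calc ∑ t, (F ΘPES t - d t) ^ 2
      ≤ ∑ t, M ^ 2 * ((F ΘPES t - d t) / d t) ^ 2 := by
        refine Finset.sum_le_sum fun t _ => ?_
        calc (F ΘPES t - d t) ^ 2 = d t ^ 2 * ((F ΘPES t - d t) / d t) ^ 2 := by
              have := (hpos t).ne'
              field_simp
          _ ≤ M ^ 2 * ((F ΘPES t - d t) / d t) ^ 2 :=
              mul_le_mul_of_nonneg_right
                (pow_le_pow_left₀ (hpos t).le (hbound t).2 2) (sq_nonneg _)
    _ = M ^ 2 * ∑ t, ((F ΘPES t - d t) / d t) ^ 2 := by rw [Finset.mul_sum]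
    _ ≤ M ^ 2 * ∑ t, ((F ΘES t - d t) / d t) ^ 2 :=
        mul_le_mul_of_nonneg_left (hPES ΘES) (sq_nonneg M)
    _ ≤ M ^ 2 * ∑ t, (F ΘES t - d t) ^ 2 / m ^ 2 := by
        refine mul_le_mul_of_nonneg_left (Finset.sum_le_sum fun t _ => ?_) (sq_nonneg M)
        rw [div_pow]
        exact div_le_div_of_nonneg_left (sq_nonneg _) (pow_pos hm 2)
          (pow_le_pow_left₀ hm.le (hbound t).1 2)
    _ = (M ^ 2 / m ^ 2) * ∑ t, (F ΘES t - d t) ^ 2 := by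
        rw [← Finset.sum_div]
        ring
end

section
/- Let T be a nonempty finite index set, let P be a type (the parameter space), let F : P → T → ℝ be a family of forecast maps, and let d : T → ℝ satisfy m ≤ d(t) ≤ M for all t ∈ T with 0 < m. Define L_ES(Θ) = Σ_{t∈T} (F(Θ)(t) − d(t))² and L_PES(Θ) = Σ_{t∈T} ((F(Θ)(t) − d(t))/d(t))². If Θ*_ES is a global minimizer of L_ES over P and Θ*_PES is a global minimizer of L_PES over P, then L_PES(Θ*_PES) ≤ L_PES(Θ*_ES) ≤ (M²/m²) · L_PES(Θ*_PES). -/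
/-!
Since `0 < m ≤ d t ≤ M`, the two losses are comparable termwise: `m² · L_PES ≤ L_ES ≤ M² · L_PES`.
Chaining these around the minimality of `ΘES` for `L_ES` gives
`m² · L_PES(ΘES) ≤ L_ES(ΘES) ≤ L_ES(ΘPES) ≤ M² · L_PES(ΘPES)`.
-/

theorem pes_of_minimizers_bound {T : Type*} [Fintype T] [Nonempty T] {P : Type*}
    (F : P → T → ℝ) (d : T → ℝ) (m M : ℝ) (hm : 0 < m)
    (hbound : ∀ t, m ≤ d t ∧ d t ≤ M)
    (ΘES ΘPES : P)
    (hES : ∀ Θ : P, ∑ t, (F ΘES t - d t) ^ 2 ≤ ∑ t, (F Θ t - d t) ^ 2)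
    (hPES : ∀ Θ : P, ∑ t, ((F ΘPES t - d t) / d t) ^ 2 ≤ ∑ t, ((F Θ t - d t) / d t) ^ 2) :
    ∑ t, ((F ΘPES t - d t) / d t) ^ 2 ≤ ∑ t, ((F ΘES t - d t) / d t) ^ 2 ∧
    ∑ t, ((F ΘES t - d t) / d t) ^ 2 ≤ (M ^ 2 / m ^ 2) * ∑ t, ((F ΘPES t - d t) / d t) ^ 2 := by
  refine ⟨hPES ΘES, ?_⟩
  have hterm : ∀ Θ t, (F Θ t - d t) ^ 2 = d t ^ 2 * ((F Θ t - d t) / d t) ^ 2 := by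
    intro Θ t
    have hd : d t ≠ 0 := (hm.trans_le (hbound t).1).ne'
    field_simp
  have hlower : m ^ 2 * ∑ t, ((F ΘES t - d t) / d t) ^ 2 ≤ ∑ t, (F ΘES t - d t) ^ 2 := by
    rw [Finset.mul_sum]
    refine Finset.sum_le_sum fun t _ => ?_
    rw [hterm ΘES t]
    exact mul_le_mul_of_nonneg_right (pow_le_pow_left₀ hm.le (hbound t).1 2) (sq_nonneg _)
  have hupper : ∑ t, (F ΘPES t - d t) ^ 2 ≤ M ^ 2 * ∑ t, ((F ΘPES t - d t) / d t) ^ 2 := by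
    rw [Finset.mul_sum]
    refine Finset.sum_le_sum fun t _ => ?_
    rw [hterm ΘPES t]
    exact mul_le_mul_of_nonneg_right
      (pow_le_pow_left₀ (hm.le.trans (hbound t).1) (hbound t).2 2) (sq_nonneg _)
  rw [div_mul_eq_mul_div, le_div_iff₀ (pow_pos hm 2), mul_comm]
  exact hlower.trans ((hES ΘPES).trans hupper)
end

section
/- Let T be a nonempty finite index set and d : T → ℝ with d(t) > 0 for all t ∈ T. Then β₀* = log(Σ_{t∈T} 1/d(t)) − log(Σ_{t∈T} 1/d(t)²) is a global minimizer over ℝ of the null-model PES objective J(β₀) = (1/2) · Σ_{t∈T} (exp(β₀)/d(t) − 1)²; that is, J(β₀*) ≤ J(β₀) for every β₀ ∈ ℝ. -/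
/-!
In the variable `x = exp β₀ > 0` the objective is the quadratic
`(x² B - 2 x A + |T|) / 2` with `A = ∑ 1 / d t` and `B = ∑ 1 / (d t)²`, both positive.
Its vertex `x = A / B` is positive, hence equal to `exp (log A - log B)`, and completing the
square shows that it is the minimum.
-/

theorem null_model_pes_minimizer {T : Type*} [Fintype T] [Nonempty T]
    (d : T → ℝ) (hd : ∀ t, 0 < d t) :
    ∀ β₀ : ℝ,
      (1 / 2) * ∑ t, (Real.exp (Real.log (∑ t, 1 / d t) - Real.log (∑ t, 1 / (d t) ^ 2)) / d t - 1) ^ 2 ≤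
      (1 / 2) * ∑ t, (Real.exp β₀ / d t - 1) ^ 2 := by
  intro β₀
  have hA : 0 < ∑ t, 1 / d t :=
    Finset.sum_pos (fun t _ => one_div_pos.mpr (hd t)) Finset.univ_nonempty
  have hB : 0 < ∑ t, 1 / (d t) ^ 2 :=
    Finset.sum_pos (fun t _ => one_div_pos.mpr (pow_pos (hd t) 2)) Finset.univ_nonempty
  have expand : ∀ x : ℝ, ∑ t, (x / d t - 1) ^ 2 =
      x ^ 2 * ∑ t, 1 / (d t) ^ 2 - 2 * x * ∑ t, 1 / d t + ∑ _t : T, (1 : ℝ) := by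
    intro x
    rw [Finset.mul_sum, Finset.mul_sum, ← Finset.sum_sub_distrib, ← Finset.sum_add_distrib]
    refine Finset.sum_congr rfl fun t _ => ?_
    ring
  rw [Real.exp_sub, Real.exp_log hA, Real.exp_log hB, expand, expand]
  generalize (∑ t, 1 / d t) = A at *
  generalize (∑ t, 1 / (d t) ^ 2) = B at *
  have hsq : 0 ≤ B * (Real.exp β₀ - A / B) ^ 2 := by positivity
  have hAB : A = A / B * B := by field_simp
  generalize A / B = y at *
  subst hAB
  nlinarith
end
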